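/- Let K, L ⊆ ℝ^d be convex bodies and m a positive integer with γ_m(K) ≤ 1/2 and γ_m(L) ≤ 1/2. Let a ∈ K, b ∈ L, δ ≥ 1, and let T : ℝ^d → ℝ^d be an invertible linear map such that L − b ⊆ T(K − a) ⊆ δ·(L − b). Then m/(1 − γ_m(K)) ≤ δ·(m/(1 − γ_m(L))). -/

import Mathlib

open Set Pointwise

section Defs

variable {V : Type*} [NormedAddCommGroup V] [NormedSpace ℝ V]

/-- A convex body: compact, convex, with nonempty interior. -/
def IsConvexBody (K : Set V) : Prop :=
  IsCompact K ∧ Convex ℝ K ∧ (interior K).Nonempty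

/-- `K` can be covered by `m` homothets of ratio `lam`. -/
def CoversWith (K : Set V) (lam : ℝ) (m : ℕ) : Prop :=
  ∃ t : Fin m → V, K ⊆ ⋃ i, (fun x => lam • x + t i) '' K

/-- The `m`-covering number `γ_m(K)`. -/
noncomputable def gammaC (m : ℕ) (K : Set V) : ℝ :=
  sInf {lam : ℝ | 0 < lam ∧ CoversWith K lam m}

/-- The covering index `coin(K)`. -/
noncomputable def coin (K : Set V) : ℝ :=
  sInf {r : ℝ | ∃ m : ℕ, 0 < m ∧ gammaC m K ≤ 1 / 2 ∧ r = (m : ℝ) / (1 - gammaC m K)}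

/-- The weak covering index `wcoin(K)`. -/
noncomputable def wcoin (K : Set V) : ℝ :=
  sInf {r : ℝ | ∃ m : ℕ, 0 < m ∧ gammaC m K < 1 ∧ r = (m : ℝ) / (1 - gammaC m K)}

/-- `N_λ(K)`: the least number of translates of `λ • K` needed to cover `K`. -/
noncomputable def covN (lam : ℝ) (K : Set V) : ℕ :=
  sInf {n : ℕ | CoversWith K lam n}

/-- A convex body is tightly covered if for every `0 < λ < 1` it contains `N_λ(K)`
points no two of which lie in a common homothet `λ • K + t`. -/
def TightlyCovered (K : Set V) : Prop :=
  ∀ lam : ℝ, 0 < lam → lam < 1 →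
    ∃ p : Fin (covN lam K) → V, (∀ i, p i ∈ K) ∧
      ∀ i j, i ≠ j → ∀ t : V,
        ¬(p i ∈ (fun x => lam • x + t) '' K ∧ p j ∈ (fun x => lam • x + t) '' K)

/-- The covering parameter `C(K)` of Swanepoel. -/
noncomputable def covParam (K : Set V) : ℝ :=
  sInf {r : ℝ | ∃ k : ℕ, ∃ lam : Fin k → ℝ, ∃ t : Fin k → V,
    (∀ i, 0 < lam i ∧ lam i < 1) ∧
    (K ⊆ ⋃ i, (fun x => lam i • x + t i) '' K) ∧
    r = ∑ i, 1 / (1 - lam i)}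

/-- The (multiplicative) Banach–Mazur distance. -/
noncomputable def distBM {d : ℕ} (K L : Set (Fin d → ℝ)) : ℝ :=
  sInf {δ : ℝ | 1 ≤ δ ∧ ∃ T : (Fin d → ℝ) ≃ₗ[ℝ] (Fin d → ℝ), ∃ a ∈ K, ∃ b ∈ L,
    (fun x => x - b) '' L ⊆ T '' ((fun x => x - a) '' K) ∧
    T '' ((fun x => x - a) '' K) ⊆ δ • ((fun x => x - b) '' L)}

end Defs

/-!
Translations and linear isomorphisms do not change `γ_m`, so one may assume `L ⊆ K ⊆ δ • L`.
Scaling a covering of `L` by `δ` covers `K` by homothets of `L`, hence of `K`, which gives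
`γ_m(K) ≤ δ γ_m(L)`. With `x = γ_m(K)` and `y = γ_m(L)` this says `δ - δ y ≤ δ - x`, and
`δ² (1 - x) - (δ - x) = (δ - 1) (δ - x (δ + 1))` is nonnegative since `x ≤ 1 / 2` and `1 ≤ δ`.
-/

section Sandwich

variable {V W : Type*} [NormedAddCommGroup V] [NormedSpace ℝ V]
  [NormedAddCommGroup W] [NormedSpace ℝ W] {K L : Set V} {lam δ : ℝ} {m : ℕ}

theorem CoversWith.image (h : CoversWith K lam m) (f : V →ᵃ[ℝ] W) :
    CoversWith (f '' K) lam m := by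
  obtain ⟨t, ht⟩ := h
  refine ⟨fun i => f (t i) - lam • f 0, ?_⟩
  rintro _ ⟨x, hx, rfl⟩
  obtain ⟨i, y, hy, rfl⟩ := mem_iUnion.1 (ht hx)
  refine mem_iUnion.2 ⟨i, f y, mem_image_of_mem f hy, ?_⟩
  have hf : ∀ v, f v = f.linear v + f 0 := congrFun f.decomp
  simp only [hf y, hf (t i), hf (lam • y + t i), map_add, map_smul]
  module

theorem coversWith_image_affineEquiv_iff (e : V ≃ᵃ[ℝ] W) :
    CoversWith (e '' K) lam m ↔ CoversWith K lam m := by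
  refine ⟨fun h => ?_, fun h => h.image e.toAffineMap⟩
  have hK : e.symm '' (e '' K) = K := e.toEquiv.symm_image_image K
  exact hK ▸ h.image e.symm.toAffineMap

theorem gammaC_image_affineEquiv (e : V ≃ᵃ[ℝ] W) (m : ℕ) (K : Set V) :
    gammaC m (e '' K) = gammaC m K := by
  simp only [gammaC, coversWith_image_affineEquiv_iff]

theorem gammaC_image_sub_right (a : V) (m : ℕ) (K : Set V) :
    gammaC m ((fun x => x - a) '' K) = gammaC m K :=
  gammaC_image_affineEquiv (AffineEquiv.vaddConst ℝ a).symm m K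

theorem gammaC_image_linearEquiv (T : V ≃ₗ[ℝ] W) (m : ℕ) (K : Set V) :
    gammaC m (T '' K) = gammaC m K :=
  gammaC_image_affineEquiv T.toAffineEquiv m K

theorem CoversWith.of_subset_smul (h : CoversWith L lam m) (hLK : L ⊆ K) (hKL : K ⊆ δ • L) :
    CoversWith K (δ * lam) m := by
  obtain ⟨t, ht⟩ := h
  refine ⟨fun i => δ • t i, fun x hx => ?_⟩
  obtain ⟨y, hy, rfl⟩ := hKL hx
  obtain ⟨i, z, hz, rfl⟩ := mem_iUnion.1 (ht hy)
  exact mem_iUnion.2 ⟨i, z, hLK hz, by simp only [smul_add, mul_smul]⟩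

theorem coversWith_one (hm : 0 < m) (K : Set V) : CoversWith K 1 m :=
  ⟨fun _ => 0, fun x hx => mem_iUnion.2 ⟨⟨0, hm⟩, x, hx, by simp⟩⟩

theorem gammaC_le (hlam : 0 < lam) (h : CoversWith K lam m) : gammaC m K ≤ lam :=
  csInf_le ⟨0, fun _ hx => hx.1.le⟩ ⟨hlam, h⟩

theorem gammaC_le_mul_of_subset_smul (hm : 0 < m) (hδ : 0 < δ) (hLK : L ⊆ K)
    (hKL : K ⊆ δ • L) : gammaC m K ≤ δ * gammaC m L := by
  rw [← div_le_iff₀' hδ]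
  refine le_csInf ⟨1, one_pos, coversWith_one hm L⟩ fun lam ⟨hlam, hcov⟩ => ?_
  rw [div_le_iff₀' hδ]
  exact gammaC_le (mul_pos hδ hlam) (hcov.of_subset_smul hLK hKL)

theorem one_sub_le_mul_one_sub {x y : ℝ} (hδ : 1 ≤ δ) (hx : x ≤ 1 / 2) (hxy : x ≤ δ * y) :
    1 - y ≤ δ * (1 - x) := by
  have hxδ : x * (δ + 1) ≤ δ := by
    calc x * (δ + 1) ≤ 1 / 2 * (δ + 1) := by gcongr
      _ ≤ δ := by linarith
  have hprod : 0 ≤ (δ - 1) * (δ - x * (δ + 1)) :=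
    mul_nonneg (sub_nonneg.2 hδ) (sub_nonneg.2 hxδ)
  refine le_of_mul_le_mul_left ?_ (zero_lt_one.trans_le hδ)
  calc δ * (1 - y) ≤ δ - x := by linarith
    _ ≤ δ * (δ * (1 - x)) := by linarith

theorem div_one_sub_gammaC_le_of_subset_smul (hm : 0 < m) (hK : gammaC m K ≤ 1 / 2)
    (hL : gammaC m L < 1) (hδ : 1 ≤ δ) (hLK : L ⊆ K) (hKL : K ⊆ δ • L) :
    (m : ℝ) / (1 - gammaC m K) ≤ δ * ((m : ℝ) / (1 - gammaC m L)) := by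
  have hγ : 1 - gammaC m L ≤ δ * (1 - gammaC m K) :=
    one_sub_le_mul_one_sub hδ hK
      (gammaC_le_mul_of_subset_smul hm (zero_lt_one.trans_le hδ) hLK hKL)
  rw [← mul_div_assoc, div_le_div_iff₀ (by linarith) (by linarith)]
  calc (m : ℝ) * (1 - gammaC m L) ≤ m * (δ * (1 - gammaC m K)) := by gcongr
    _ = δ * m * (1 - gammaC m K) := by ring

theorem fm_le_of_sandwich_general {K : Set V} {L : Set W} (hm : 0 < m)
    (hK : gammaC m K ≤ 1 / 2) (hL : gammaC m L < 1) (a : V) (b : W) (hδ : 1 ≤ δ)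
    (T : V ≃ₗ[ℝ] W) (hLK : (fun x => x - b) '' L ⊆ T '' ((fun x => x - a) '' K))
    (hKL : T '' ((fun x => x - a) '' K) ⊆ δ • ((fun x => x - b) '' L)) :
    (m : ℝ) / (1 - gammaC m K) ≤ δ * ((m : ℝ) / (1 - gammaC m L)) := by
  have hγK : gammaC m (T '' ((fun x => x - a) '' K)) = gammaC m K := by
    rw [gammaC_image_linearEquiv, gammaC_image_sub_right]
  have hγL : gammaC m ((fun x => x - b) '' L) = gammaC m L := gammaC_image_sub_right b m L
  rw [← hγK] at hK ⊢
  rw [← hγL] at hL ⊢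
  exact div_one_sub_gammaC_le_of_subset_smul hm hK hL hδ hLK hKL

end Sandwich

/-- `f_m(K) ≤ δ f_m(L)` under a Banach–Mazur sandwich. -/
theorem fm_le_of_sandwich (d : ℕ) (K L : Set (Fin d → ℝ))
    (hK : IsConvexBody K) (hL : IsConvexBody L)
    (m : ℕ) (hm : 0 < m)
    (hgK : gammaC m K ≤ 1 / 2) (hgL : gammaC m L ≤ 1 / 2)
    (a : Fin d → ℝ) (ha : a ∈ K) (b : Fin d → ℝ) (hb : b ∈ L)
    (δ : ℝ) (hδ : 1 ≤ δ) (T : (Fin d → ℝ) ≃ₗ[ℝ] (Fin d → ℝ))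
    (h1 : (fun x => x - b) '' L ⊆ T '' ((fun x => x - a) '' K))
    (h2 : T '' ((fun x => x - a) '' K) ⊆ δ • ((fun x => x - b) '' L)) :
    (m : ℝ) / (1 - gammaC m K) ≤ δ * ((m : ℝ) / (1 - gammaC m L)) :=
  fm_le_of_sandwich_general hm hgK (hgL.trans_lt one_half_lt_one) a b hδ T h1 h2
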